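/- Let X be a real Banach space with a Schauder basis (e_j)_{j≥1}, i.e. every x ∈ X has a unique representation x = Σ_{j=1}^∞ a_j e_j with a_j ∈ ℝ and the partial sums converging to x in norm. For k ≥ 1 set Y_k = span{e_1, …, e_k} and Z_k = the closure of span{e_j : j ≥ k}. Let L : X → ℝ be a C¹ functional (Fréchet differentiable with continuous derivative dL : X → X*) which is even (L(−u) = L(u) for all u ∈ X). Fix k ≥ 1 and suppose: (L₃) there exist r(k) > 0 and a(k) ∈ ℝ such that sup{L(u) : u ∈ Y_k, ‖u‖ = r(k)} ≤ a(k); (L₄) there exists b(k) ∈ ℝ such that L(u) ≥ b(k) for all u ∈ ℝe_k ⊕ Z_{k+1}. Then b(k) ≤ a(k), and if in addition L satisfies the (PS)_c condition for every c ∈ [b(k), a(k)], then L has a critical point with critical value in [b(k), a(k)]: there exists u ∈ X with dL(u) = 0 and b(k) ≤ L(u) ≤ a(k). -/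

import Mathlib

open Filter Topology

/-- `L` satisfies the `(PS)_c` condition (w.r.t. the derivative `dL`). -/
def PalaisSmaleC {X : Type*} [NormedAddCommGroup X] [NormedSpace ℝ X]
    (L : X → ℝ) (dL : X → X →L[ℝ] ℝ) (c : ℝ) : Prop :=
  ∀ x : ℕ → X, Tendsto (fun n => L (x n)) atTop (𝓝 c) →
    Tendsto (fun n => ‖dL (x n)‖) atTop (𝓝 0) →
    ∃ (y : X) (φ : ℕ → ℕ), StrictMono φ ∧ Tendsto (fun n => x (φ n)) atTop (𝓝 y)

/-- Mod-2 chains on ordered simplices, a simplex being the list of its vertices. -/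
abbrev ListChain (E : Type*) := List E →₀ ZMod 2

namespace ListChain

variable {E : Type*}

/-- The join of a chain with an apex `x`. -/
noncomputable def cone (x : E) : ListChain E →ₗ[ZMod 2] ListChain E :=
  Finsupp.lmapDomain (ZMod 2) (ZMod 2) (List.cons x)

/-- The (augmented) boundary of a single simplex. -/
noncomputable def listBoundary : List E → ListChain E
  | [] => 0
  | x :: l => Finsupp.single l 1 + cone x (listBoundary l)

/-- The (augmented) boundary operator. -/
noncomputable def boundary : ListChain E →ₗ[ZMod 2] ListChain E :=
  Finsupp.linearCombination (ZMod 2) listBoundary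

@[simp]
lemma cone_single (x : E) (l : List E) :
    cone x (Finsupp.single l 1) = Finsupp.single (x :: l) 1 := by
  simp [cone]

@[simp]
lemma boundary_single (l : List E) : boundary (Finsupp.single l 1) = listBoundary l := by
  simp [boundary]

lemma add_self (c : ListChain E) : c + c = 0 := by
  ext l
  exact CharTwo.add_self_eq_zero _

lemma boundary_cone (x : E) (c : ListChain E) :
    boundary (cone x c) = c + cone x (boundary c) := by
  induction c using Finsupp.induction_linear with
  | zero => simp
  | add c d hc hd => simp only [map_add, hc, hd]; abel
  | single l a =>
    have : Finsupp.single l a = a • (Finsupp.single l 1 : ListChain E) := by simp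
    rw [this]
    simp only [map_smul, cone_single, boundary_single, listBoundary, smul_add]

lemma boundary_listBoundary (l : List E) : boundary (listBoundary l) = 0 := by
  induction l with
  | nil => simp [listBoundary]
  | cons x l ih =>
    simp only [listBoundary, map_add, boundary_single, boundary_cone, ih, map_zero, add_zero]
    exact add_self _

lemma map_mem_of_mem_supported {M : Type*} [AddCommGroup M] [Module (ZMod 2) M]
    (T : ListChain E →ₗ[ZMod 2] M) {S : Set (List E)} {P : Submodule (ZMod 2) M}
    (h : ∀ l ∈ S, T (Finsupp.single l 1) ∈ P) {c : ListChain E}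
    (hc : c ∈ Finsupp.supported (ZMod 2) (ZMod 2) S) : T c ∈ P := by
  rw [Finsupp.supported_eq_span_single] at hc
  have : Submodule.span (ZMod 2) ((fun i => Finsupp.single i (1 : ZMod 2)) '' S) ≤ P.comap T := by
    rw [Submodule.span_le]
    rintro _ ⟨l, hl, rfl⟩
    exact h l hl
  exact this hc

lemma map_eq_of_mem_supported {M : Type*} [AddCommGroup M] [Module (ZMod 2) M]
    (T T' : ListChain E →ₗ[ZMod 2] M) {S : Set (List E)}
    (h : ∀ l ∈ S, T (Finsupp.single l 1) = T' (Finsupp.single l 1)) {c : ListChain E}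
    (hc : c ∈ Finsupp.supported (ZMod 2) (ZMod 2) S) : T c = T' c := by
  have := map_mem_of_mem_supported (T - T') (P := ⊥)
    (fun l hl => by simp [h l hl]) hc
  simpa [sub_eq_zero] using this

lemma cone_mem_supported {x : E} {S S' : Set (List E)} (h : ∀ l ∈ S, x :: l ∈ S')
    {c : ListChain E} (hc : c ∈ Finsupp.supported (ZMod 2) (ZMod 2) S) :
    cone x c ∈ Finsupp.supported (ZMod 2) (ZMod 2) S' := by
  refine map_mem_of_mem_supported _ (fun l hl => ?_) hc
  rw [cone_single]
  exact Finsupp.single_mem_supported _ _ (h l hl)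

/-- Every face of `l` is a sublist of `l`, one vertex shorter. -/
lemma listBoundary_mem_supported (l : List E) :
    listBoundary l ∈ Finsupp.supported (ZMod 2) (ZMod 2)
      {l' | l'.length + 1 = l.length ∧ l' ⊆ l} := by
  induction l with
  | nil => simp [listBoundary]
  | cons x l ih =>
    refine add_mem (Finsupp.single_mem_supported _ _ ⟨rfl, List.subset_cons_self x l⟩)
      (cone_mem_supported (fun l' hl' => ?_) ih)
    exact ⟨by simp [hl'.1], List.cons_subset_cons x hl'.2⟩

lemma listBoundary_mem_supported_length (m : ℕ) (l : List E) (hl : l.length = m + 1) :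
    listBoundary l ∈ Finsupp.supported (ZMod 2) (ZMod 2) {l' | l'.length = m} :=
  Finsupp.supported_mono (fun l' hl' => by have := hl'.1; simp; omega)
    (listBoundary_mem_supported l)

/-! ### Cup products of coboundaries -/

/-- The cochain `δ(p 0) ∪ δ(p 1) ∪ ⋯` evaluated at a simplex. -/
def cupCoboundaries : (ℕ → E → ZMod 2) → List E → ZMod 2
  | _, [] => 0
  | _, [_] => 1
  | p, x :: y :: l => (p 0 x + p 0 y) * cupCoboundaries (fun i => p (i + 1)) (y :: l)

/-- The cochain `p 0 ∪ δ(p 1) ∪ δ(p 2) ∪ ⋯` evaluated at a simplex. -/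
def headCup (p : ℕ → E → ZMod 2) : List E → ZMod 2
  | [] => 0
  | x :: l => p 0 x * cupCoboundaries (fun i => p (i + 1)) (x :: l)

/-- Linear extension of a function on simplices to chains. -/
noncomputable def eval (φ : List E → ZMod 2) : ListChain E →ₗ[ZMod 2] ZMod 2 :=
  Finsupp.linearCombination (ZMod 2) φ

@[simp]
lemma eval_single (φ : List E → ZMod 2) (l : List E) : eval φ (Finsupp.single l 1) = φ l := by
  simp [eval]

lemma eval_cone (φ : List E → ZMod 2) (x : E) (c : ListChain E) :
    eval φ (cone x c) = eval (fun l => φ (x :: l)) c := by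
  simp [eval, cone, Finsupp.linearCombination_mapDomain, Function.comp_def]

lemma eval_const_mul (a : ZMod 2) (φ : List E → ZMod 2) (c : ListChain E) :
    eval (fun l => a * φ l) c = a * eval φ c := by
  simp only [eval, Finsupp.linearCombination_apply, Finsupp.sum, Finset.mul_sum, smul_eq_mul]
  exact Finset.sum_congr rfl fun _ _ => by ring

lemma eval_cupCoboundaries_listBoundary (l : List E) (hl : 2 ≤ l.length)
    (p : ℕ → E → ZMod 2) : eval (cupCoboundaries p) (listBoundary l) = 0 := by
  induction l generalizing p with
  | nil => simp at hl
  | cons x l ih =>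
    rcases l with _ | ⟨y, l⟩
    · simp at hl
    rcases l with _ | ⟨z, l⟩
    · simp [listBoundary, cupCoboundaries]
      decide
    · have h := ih (by simp) (fun i => p (i + 1))
      rw [listBoundary] at h
      rw [listBoundary, listBoundary]
      simp only [map_add, eval_single, cone_single, eval_cone] at h ⊢
      rw [show (fun l => cupCoboundaries p (x :: y :: l)) =
        fun l => (p 0 x + p 0 y) * cupCoboundaries (fun i => p (i + 1)) (y :: l) from rfl,
        eval_const_mul]
      simp only [cupCoboundaries] at h ⊢
      generalize eval _ _ = t at h ⊢
      generalize cupCoboundaries _ (z :: l) = s at h ⊢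
      generalize p 0 x = a, p 0 y = b, p 0 z = d at *
      revert a b d s t
      decide

lemma eval_headCup_listBoundary (l : List E) (hl : 2 ≤ l.length) (p : ℕ → E → ZMod 2) :
    eval (headCup p) (listBoundary l) = cupCoboundaries p l := by
  rcases l with _ | ⟨x, _ | ⟨y, l⟩⟩
  · simp at hl
  · simp at hl
  · have h := eval_cupCoboundaries_listBoundary (x :: y :: l) hl (fun i => p (i + 1))
    rw [listBoundary] at h ⊢
    simp only [map_add, eval_single, eval_cone] at h ⊢
    rw [show (fun l => headCup p (x :: l)) =
        fun l => p 0 x * cupCoboundaries (fun i => p (i + 1)) (x :: l) from rfl, eval_const_mul]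
    simp only [headCup, cupCoboundaries]
    generalize eval _ _ = t at h ⊢
    generalize cupCoboundaries _ (y :: l) = s at h ⊢
    generalize p 0 x = a, p 0 y = b at *
    revert a b s t
    decide

/-- A nonzero cup product of coboundaries changes value along each edge it uses. -/
lemma ne_of_cupCoboundaries_ne_zero (l : List E) (p : ℕ → E → ZMod 2)
    (h : cupCoboundaries p l ≠ 0) (i : ℕ) (hi : i + 1 < l.length) :
    p i l[i] ≠ p i l[i + 1] := by
  induction l generalizing p i with
  | nil => simp at hi
  | cons x l ih =>
    rcases l with _ | ⟨y, l⟩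
    · simp at hi
    rw [cupCoboundaries] at h
    rcases i with _ | i
    · intro he
      apply h
      simp only [List.getElem_cons_zero, List.getElem_cons_succ, zero_add] at he
      rw [he, CharTwo.add_self_eq_zero, zero_mul]
    · exact ih _ (right_ne_zero_of_mul h) i (by simpa using hi)

/-! ### The antipodal action -/

section Neg

variable [AddCommGroup E]

/-- The antipodal action on chains. -/
noncomputable def antipode : ListChain E →ₗ[ZMod 2] ListChain E :=
  Finsupp.lmapDomain (ZMod 2) (ZMod 2) (List.map Neg.neg)

@[simp]
lemma antipode_single (l : List E) :
    antipode (Finsupp.single l 1) = Finsupp.single (l.map Neg.neg) 1 := by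
  simp [antipode]

lemma antipode_antipode (c : ListChain E) : antipode (antipode c) = c := by
  simp [antipode, ← Finsupp.mapDomain_comp]

lemma antipode_cone (x : E) (c : ListChain E) :
    antipode (cone x c) = cone (-x) (antipode c) := by
  simp only [antipode, cone, Finsupp.lmapDomain_apply, ← Finsupp.mapDomain_comp]
  rfl

lemma antipode_listBoundary (l : List E) :
    antipode (listBoundary l) = listBoundary (l.map Neg.neg) := by
  induction l with
  | nil => simp [listBoundary]
  | cons x l ih => simp [listBoundary, antipode_cone, ih]

lemma antipode_boundary (c : ListChain E) : antipode (boundary c) = boundary (antipode c) := by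
  have h : ∀ l ∈ (Set.univ : Set (List E)), (antipode ∘ₗ boundary) (Finsupp.single l 1) =
      (boundary ∘ₗ antipode) (Finsupp.single l 1) := fun l _ => by
    simp only [LinearMap.comp_apply, boundary_single, antipode_single, antipode_listBoundary]
  exact map_eq_of_mem_supported _ _ h (by rw [Finsupp.supported_univ]; trivial)

lemma cupCoboundaries_map_neg (l : List E) (p : ℕ → E → ZMod 2) (h0 : ∀ v ∈ l, v ≠ 0)
    (hp : ∀ i, ∀ v ≠ 0, p i (-v) = p i v + 1) :
    cupCoboundaries p (l.map Neg.neg) = cupCoboundaries p l := by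
  induction l generalizing p with
  | nil => rfl
  | cons x l ih =>
    rcases l with _ | ⟨y, l⟩
    · rfl
    · have := ih (fun i => p (i + 1)) (fun v hv => h0 v (List.mem_cons_of_mem _ hv))
        (fun i => hp (i + 1))
      simp only [List.map_cons, cupCoboundaries] at this ⊢
      rw [this, hp 0 x (h0 x (by simp)), hp 0 y (h0 y (by simp))]
      congr 1
      generalize p 0 x = a, p 0 y = b
      revert a b
      decide

/-- Pairing an antipodal tower of chains with a cup product of coboundaries. -/
lemma eval_cupCoboundaries_tower (n : ℕ) (c : ℕ → ListChain E) (x : E)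
    (hzero : c 0 = Finsupp.single [x] 1)
    (hsupp : ∀ k ≤ n, c k ∈ Finsupp.supported (ZMod 2) (ZMod 2)
      {l | l.length = k + 1 ∧ ∀ v ∈ l, v ≠ 0})
    (hbd : ∀ k < n, boundary (c (k + 1)) = c k + antipode (c k))
    (k : ℕ) (hk : k ≤ n) (p : ℕ → E → ZMod 2)
    (hp : ∀ i, ∀ v ≠ 0, p i (-v) = p i v + 1) :
    eval (cupCoboundaries p) (c k) = 1 := by
  induction k generalizing p with
  | zero => simp [hzero, cupCoboundaries]
  | succ k ih =>
    have h1 : eval (cupCoboundaries p) (c (k + 1)) =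
        (eval (headCup p) ∘ₗ boundary) (c (k + 1)) :=
      map_eq_of_mem_supported _ _ (fun l hl => by
        simp [eval_headCup_listBoundary l (by have := hl.1; omega)]) (hsupp _ hk)
    have h2 : (eval (headCup p) + eval (headCup p) ∘ₗ antipode) (c k) =
        eval (cupCoboundaries fun i => p (i + 1)) (c k) := by
      refine map_eq_of_mem_supported _ _ (fun l hl => ?_) (hsupp k (by omega))
      rcases l with _ | ⟨y, l⟩
      · simp at hl
      have := cupCoboundaries_map_neg (y :: l) (fun i => p (i + 1)) hl.2 (fun i => hp (i + 1))
      simp only [List.map_cons] at this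
      simp only [LinearMap.add_apply, LinearMap.comp_apply, antipode_single, eval_single,
        List.map_cons, headCup, this, hp 0 y (hl.2 y (by simp))]
      generalize cupCoboundaries _ _ = s
      generalize p 0 y = a
      revert a s
      decide
    rw [h1, LinearMap.comp_apply, hbd k (by omega), map_add]
    exact h2.trans (ih (by omega) _ fun i => hp (i + 1))

/-- The `k`-dimensional hemispheres of the cross-polytope with vertices `± e i`. -/
noncomputable def hemisphere (e : ℕ → E) : ℕ → ListChain E
  | 0 => Finsupp.single [e 0] 1
  | k + 1 => cone (e (k + 1)) (hemisphere e k + antipode (hemisphere e k))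

lemma hemisphere_succ (e : ℕ → E) (k : ℕ) : hemisphere e (k + 1) =
    cone (e (k + 1)) (hemisphere e k + antipode (hemisphere e k)) := rfl

lemma boundary_add_antipode_hemisphere (e : ℕ → E) (k : ℕ) :
    boundary (hemisphere e k + antipode (hemisphere e k)) = 0 ∧
    boundary (hemisphere e (k + 1)) = hemisphere e k + antipode (hemisphere e k) := by
  induction k with
  | zero =>
    have : boundary (hemisphere e 0 + antipode (hemisphere e 0)) = 0 := by
      simp only [hemisphere, antipode_single, map_add, boundary_single, listBoundary, map_zero,
        List.map_cons, List.map_nil, add_zero]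
      exact add_self _
    refine ⟨this, ?_⟩
    rw [hemisphere_succ, boundary_cone, this, map_zero, add_zero]
  | succ k ih =>
    have : boundary (hemisphere e (k + 1) + antipode (hemisphere e (k + 1))) = 0 := by
      rw [map_add, ← antipode_boundary, ih.2, map_add, antipode_antipode,
        add_comm (antipode _), add_self]
    refine ⟨this, ?_⟩
    rw [hemisphere_succ, boundary_cone, this, map_zero, add_zero]

lemma hemisphere_mem_supported (e : ℕ → E) (k : ℕ) :
    hemisphere e k ∈ Finsupp.supported (ZMod 2) (ZMod 2) {l | l.length = k + 1 ∧
      ∃ s : ℕ → ℤˣ, ∀ v ∈ l, ∃ i ≤ k, v = s i • e i} := by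
  induction k with
  | zero =>
    refine Finsupp.single_mem_supported _ _ ⟨rfl, 1, fun v hv => ⟨0, le_rfl, ?_⟩⟩
    simpa using hv
  | succ k ih =>
    have hneg : antipode (hemisphere e k) ∈ Finsupp.supported (ZMod 2) (ZMod 2)
        {l | l.length = k + 1 ∧ ∃ s : ℕ → ℤˣ, ∀ v ∈ l, ∃ i ≤ k, v = s i • e i} := by
      refine map_mem_of_mem_supported _ (fun l hl => ?_) ih
      obtain ⟨hlen, s, hs⟩ := hl
      rw [antipode_single]
      refine Finsupp.single_mem_supported _ _ ⟨by simpa using hlen, -s, fun v hv => ?_⟩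
      obtain ⟨w, hw, rfl⟩ := List.mem_map.1 hv
      obtain ⟨i, hi, rfl⟩ := hs w hw
      exact ⟨i, hi, by simp⟩
    refine cone_mem_supported (fun l hl => ?_) (add_mem ih hneg)
    obtain ⟨hlen, s, hs⟩ := hl
    refine ⟨by simpa using hlen, Function.update s (k + 1) 1, fun v hv => ?_⟩
    rcases List.mem_cons.1 hv with rfl | hv
    · exact ⟨k + 1, le_rfl, by simp⟩
    · obtain ⟨i, hi, rfl⟩ := hs v hv
      exact ⟨i, by omega, by rw [Function.update_of_ne (by omega)]⟩

end Neg

/-! ### Barycentric subdivision -/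

section Subdivision

variable [AddCommGroup E] [Module ℝ E]

/-- The barycenter of a simplex. -/
noncomputable def barycenter (l : List E) : E := (l.length : ℝ)⁻¹ • l.sum

/-- Barycentric subdivision of chains whose simplices have exactly `m` vertices. -/
noncomputable def subdivision : ℕ → ListChain E →ₗ[ZMod 2] ListChain E
  | 0 => LinearMap.id
  | m + 1 => Finsupp.linearCombination (ZMod 2) fun l =>
      cone (barycenter l) (subdivision m (listBoundary l))

lemma subdivision_succ_single (m : ℕ) (l : List E) :
    subdivision (m + 1) (Finsupp.single l 1) =
      cone (barycenter l) (subdivision m (listBoundary l)) := by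
  simp [subdivision]

lemma subdivision_one_single (x : E) :
    subdivision 1 (Finsupp.single [x] 1) = Finsupp.single [x] 1 := by
  rw [subdivision_succ_single]
  simp [subdivision, listBoundary, barycenter]

lemma boundary_subdivision (m : ℕ) {c : ListChain E}
    (hc : c ∈ Finsupp.supported (ZMod 2) (ZMod 2) {l | l.length = m + 1}) :
    boundary (subdivision (m + 1) c) = subdivision m (boundary c) := by
  induction m generalizing c with
  | zero =>
    have h : ∀ l ∈ {l : List E | l.length = 0 + 1},
        (boundary ∘ₗ subdivision (0 + 1)) (Finsupp.single l 1) =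
          (subdivision 0 ∘ₗ boundary) (Finsupp.single l 1) := by
      intro l hl
      obtain ⟨x, rfl⟩ := List.length_eq_one_iff.1 hl
      simp only [LinearMap.comp_apply, zero_add, subdivision_one_single]
      rfl
    exact map_eq_of_mem_supported _ _ h hc
  | succ m ih =>
    have h : ∀ l ∈ {l : List E | l.length = m + 1 + 1},
        (boundary ∘ₗ subdivision (m + 1 + 1)) (Finsupp.single l 1) =
          (subdivision (m + 1) ∘ₗ boundary) (Finsupp.single l 1) := by
      intro l hl
      simp only [LinearMap.comp_apply, subdivision_succ_single, boundary_cone, boundary_single]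
      rw [ih (listBoundary_mem_supported_length _ l hl), boundary_listBoundary]
      simp
    exact map_eq_of_mem_supported _ _ h hc

lemma antipode_subdivision (m : ℕ) (c : ListChain E) :
    antipode (subdivision m c) = subdivision m (antipode c) := by
  induction m generalizing c with
  | zero => rfl
  | succ m ih =>
    have h : ∀ l ∈ (Set.univ : Set (List E)),
        (antipode ∘ₗ subdivision (m + 1)) (Finsupp.single l 1) =
          (subdivision (m + 1) ∘ₗ antipode) (Finsupp.single l 1) := fun l _ => by
      have hb : barycenter (l.map Neg.neg) = -barycenter l := by
        have : (l.map Neg.neg).sum = -l.sum := (List.sum_neg l).symm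
        rw [barycenter, barycenter, this, List.length_map, smul_neg]
      simp only [LinearMap.comp_apply, subdivision_succ_single, antipode_single, antipode_cone,
        ih, antipode_listBoundary, hb]
    exact map_eq_of_mem_supported _ _ h (by rw [Finsupp.supported_univ]; trivial)

lemma antipode_iterate_subdivision (m N : ℕ) (c : ListChain E) :
    antipode ((subdivision m)^[N] c) = (subdivision m)^[N] (antipode c) :=
  Function.Semiconj.iterate_right (antipode_subdivision m) N c

lemma subdivision_mem_supported_length (m : ℕ) {c : ListChain E}
    (hc : c ∈ Finsupp.supported (ZMod 2) (ZMod 2) {l | l.length = m}) :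
    subdivision m c ∈ Finsupp.supported (ZMod 2) (ZMod 2) {l | l.length = m} := by
  induction m generalizing c with
  | zero => exact hc
  | succ m ih =>
    refine map_mem_of_mem_supported _ (fun l hl => ?_) hc
    rw [subdivision_succ_single]
    exact cone_mem_supported (fun l' hl' => congrArg (· + 1) hl')
      (ih (listBoundary_mem_supported_length m l hl))

lemma boundary_iterate_subdivision (m : ℕ) {c : ListChain E}
    (hc : c ∈ Finsupp.supported (ZMod 2) (ZMod 2) {l | l.length = m + 1}) (N : ℕ) :
    boundary ((subdivision (m + 1))^[N] c) = (subdivision m)^[N] (boundary c) := by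
  induction N generalizing c with
  | zero => rfl
  | succ N ih =>
    rw [Function.iterate_succ_apply, Function.iterate_succ_apply,
      ih (subdivision_mem_supported_length _ hc), boundary_subdivision _ hc]

lemma barycenter_mem {C : Set E} (hC : Convex ℝ C) (l : List E) (hl : l ≠ [])
    (hlC : ∀ v ∈ l, v ∈ C) : barycenter l ∈ C := by
  have hlen : (0 : ℝ) < l.length := by
    exact_mod_cast List.length_pos_iff.2 hl
  have : barycenter l = ∑ i : Fin l.length, (l.length : ℝ)⁻¹ • l[i] := by
    rw [← Finset.smul_sum, barycenter]
    congr 1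
    exact (Fin.sum_univ_getElem l).symm
  rw [this]
  refine hC.sum_mem (fun _ _ => by positivity) ?_ (fun i _ => hlC _ (List.getElem_mem _))
  simp [hlen.ne']

end Subdivision

section Mesh

variable [NormedAddCommGroup E] [NormedSpace ℝ E]

/-- Simplices with `m` vertices in `C`, and all edges of length at most `D`. -/
def smallSimplices (C : Set E) (D : ℝ) (m : ℕ) : Set (List E) :=
  {l | l.length = m ∧ (∀ v ∈ l, v ∈ C) ∧ ∀ v ∈ l, ∀ w ∈ l, dist v w ≤ D}

lemma dist_barycenter_le {l : List E} {m : ℕ} {D : ℝ} (hlen : l.length = m + 1)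
    (hD : ∀ v ∈ l, ∀ w ∈ l, dist v w ≤ D) {v : E} (hv : v ∈ l) :
    dist v (barycenter l) ≤ m / (m + 1) * D := by
  have hpos : (0 : ℝ) < m + 1 := by positivity
  obtain ⟨i, hi, rfl⟩ := List.mem_iff_getElem.1 hv
  have hsum : l.sum = ∑ j : Fin l.length, l[j] := (Fin.sum_univ_getElem l).symm
  have h1 : l[i] - barycenter l =
      (m + 1 : ℝ)⁻¹ • ∑ j : Fin l.length, (l[i] - l[j]) := by
    rw [Finset.sum_sub_distrib, smul_sub, Finset.sum_const, Finset.card_univ,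
      Fintype.card_fin, ← hsum, barycenter, hlen]
    push_cast
    rw [← Nat.cast_smul_eq_nsmul ℝ, smul_smul]
    push_cast
    rw [inv_mul_cancel₀ hpos.ne', one_smul]
  rw [dist_eq_norm, h1, norm_smul, Real.norm_of_nonneg (by positivity)]
  have h2 : ‖∑ j : Fin l.length, (l[i] - l[j])‖ ≤ m * D := by
    rw [← Finset.add_sum_erase _ _ (Finset.mem_univ (⟨i, hi⟩ : Fin l.length))]
    simp only [Fin.getElem_fin, sub_self, zero_add]
    refine (norm_sum_le_of_le _ (f := fun j : Fin l.length => l[i] - l[j]) (n := fun _ => D)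
      fun j _ => ?_).trans ?_
    · rw [← dist_eq_norm]
      exact hD _ (List.getElem_mem _) _ (List.getElem_mem _)
    · simp [hlen]
  calc (m + 1 : ℝ)⁻¹ * _ ≤ (m + 1 : ℝ)⁻¹ * (m * D) := by gcongr
    _ = _ := by field_simp

lemma subdivision_single_mem_supported {C : Set E} (hC : Convex ℝ C) {D : ℝ} (hD0 : 0 ≤ D)
    {n m : ℕ} (hmn : m ≤ n + 1) {l : List E} (hl : l ∈ smallSimplices C D m) :
    subdivision m (Finsupp.single l 1) ∈ Finsupp.supported (ZMod 2) (ZMod 2)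
      (smallSimplices C (n / (n + 1) * D) m) := by
  induction m generalizing C l with
  | zero =>
    refine Finsupp.single_mem_supported _ _ ?_
    obtain rfl := List.length_eq_zero_iff.1 hl.1
    simp [smallSimplices]
  | succ m ih =>
    rw [subdivision_succ_single]
    obtain ⟨hlen, hlC, hlD⟩ := hl
    set C' : Set E := C ∩ Metric.closedBall (barycenter l) (n / (n + 1) * D) with hC'
    have hratio : (m : ℝ) / (m + 1) ≤ n / (n + 1) := by
      have : (m : ℝ) ≤ n := by exact_mod_cast Nat.le_of_succ_le_succ hmn
      rw [div_le_div_iff₀ (by positivity) (by positivity)]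
      nlinarith
    have hlC' : ∀ v ∈ l, v ∈ C' := fun v hv => ⟨hlC v hv, by
      rw [Metric.mem_closedBall]
      exact (dist_barycenter_le hlen hlD hv).trans (by gcongr)⟩
    have hsub : subdivision m (listBoundary l) ∈ Finsupp.supported (ZMod 2) (ZMod 2)
        (smallSimplices C' (n / (n + 1) * D) m) := by
      refine map_mem_of_mem_supported _ (fun l' hl' => ?_) (listBoundary_mem_supported l)
      obtain ⟨hlen', hl'l⟩ := hl'
      exact ih (hC.inter (convex_closedBall _ _)) (by omega) ⟨by omega,
        fun v hv => hlC' v (hl'l hv), fun v hv w hw => hlD v (hl'l hv) w (hl'l hw)⟩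
    refine cone_mem_supported (fun l' hl' => ?_) hsub
    obtain ⟨hlen', hl'C, hl'D⟩ := hl'
    refine ⟨by simp [hlen'], ?_, ?_⟩
    · simp only [List.mem_cons, forall_eq_or_imp]
      exact ⟨barycenter_mem hC l (by rintro rfl; simp at hlen) hlC, fun v hv => (hl'C v hv).1⟩
    · simp only [List.mem_cons, forall_eq_or_imp]
      refine ⟨⟨by rw [dist_self]; positivity, fun w hw => ?_⟩, fun v hv => ⟨(hl'C v hv).2,
        hl'D v hv⟩⟩
      rw [dist_comm]
      exact (hl'C w hw).2

lemma iterate_subdivision_mem_supported {ι : Type*} {C : ι → Set E} (hC : ∀ s, Convex ℝ (C s))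
    {D : ℝ} (hD0 : 0 ≤ D) {n m : ℕ} (hmn : m ≤ n + 1) {c : ListChain E}
    (hc : c ∈ Finsupp.supported (ZMod 2) (ZMod 2) (⋃ s, smallSimplices (C s) D m)) (N : ℕ) :
    (subdivision m)^[N] c ∈ Finsupp.supported (ZMod 2) (ZMod 2)
      (⋃ s, smallSimplices (C s) ((n / (n + 1)) ^ N * D) m) := by
  induction N with
  | zero => simpa using hc
  | succ N ih =>
    rw [Function.iterate_succ_apply']
    refine map_mem_of_mem_supported _ (fun l hl => ?_) ih
    obtain ⟨s, hs⟩ := Set.mem_iUnion.1 hl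
    have := subdivision_single_mem_supported (hC s) (n := n) (by positivity) hmn hs
    rw [← mul_assoc, ← pow_succ'] at this
    exact Finsupp.supported_mono (Set.subset_iUnion_of_subset s subset_rfl) this

end Mesh

end ListChain

/-- A colouring by the sign of `g`, with ties broken so that antipodal points of `E` away from
the origin get different colours. -/
lemma exists_antipodal_colouring {E : Type*} [AddCommGroup E] [Module ℝ E] (g : E → ℝ)
    (hodd : ∀ x, g (-x) = -g x) :
    ∃ p : E → ZMod 2, (∀ v ≠ 0, p (-v) = p v + 1) ∧ ∀ v w, p v ≠ p w → g v * g w ≤ 0 := by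
  classical
  let _ : LinearOrder E := linearOrderOfSTO WellOrderingRel
  refine ⟨fun x => if 0 < g x ∨ (g x = 0 ∧ x < -x) then 1 else 0, fun v hv => ?_,
    fun v w h => ?_⟩
  · have hne : v ≠ -v := fun h => hv (by
      have : (2 : ℝ) • v = 0 := by rw [two_smul]; nth_rewrite 2 [h]; simp
      simpa using this)
    have h11 : (1 : ZMod 2) + 1 = 0 := by decide
    simp only [hodd, neg_neg, neg_pos, neg_eq_zero]
    rcases lt_trichotomy (g v) 0 with h | h | h
    · simp [h, h.ne, h.not_gt]
    · rcases lt_or_gt_of_ne hne with h' | h'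
      · simp [h, h', h'.not_gt, h11]
      · simp [h, h', h'.not_gt]
    · simp [h, h.ne', h.not_gt, h11]
  · by_contra! hpos
    apply h
    rcases pos_and_pos_or_neg_and_neg_of_mul_pos hpos with ⟨h1, h2⟩ | ⟨h1, h2⟩
    · simp [h1, h2]
    · simp [h1.ne, h2.ne, h1.not_gt, h2.not_gt]

/-- The face of the cross-polytope selected by the signs `s`. -/
def crossPolytopeFace {ι : Type*} [Fintype ι] (s : ι → ℤˣ) : Set (ι → ℝ) :=
  {x | (∀ i, 0 ≤ ((s i : ℤ) : ℝ) * x i) ∧ ∑ i, ((s i : ℤ) : ℝ) * x i = 1}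

lemma convex_crossPolytopeFace {ι : Type*} [Fintype ι] (s : ι → ℤˣ) :
    Convex ℝ (crossPolytopeFace s) := by
  rintro x ⟨hx, hx'⟩ y ⟨hy, hy'⟩ a b ha hb hab
  have key : ∀ i, ((s i : ℤ) : ℝ) * (a • x + b • y) i =
      a * (((s i : ℤ) : ℝ) * x i) + b * (((s i : ℤ) : ℝ) * y i) := fun i => by
    simp only [Pi.add_apply, Pi.smul_apply, smul_eq_mul]; ring
  refine ⟨fun i => ?_, ?_⟩
  · rw [key]
    have := hx i
    have := hy i
    positivity
  · simp only [key, Finset.sum_add_distrib, ← Finset.mul_sum, hx', hy', mul_one, hab]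

lemma sum_abs_eq_one_of_mem_crossPolytopeFace {ι : Type*} [Fintype ι] {s : ι → ℤˣ} {x : ι → ℝ}
    (hx : x ∈ crossPolytopeFace s) : ∑ i, |x i| = 1 := by
  rw [← hx.2]
  refine Finset.sum_congr rfl fun i _ => ?_
  rw [← abs_of_nonneg (hx.1 i), abs_mul]
  rcases Int.units_eq_one_or (s i) with h | h <;> simp [h]

lemma norm_le_one_of_sum_abs_eq_one {ι : Type*} [Fintype ι] {x : ι → ℝ} (hx : ∑ i, |x i| = 1) :
    ‖x‖ ≤ 1 := by
  refine (pi_norm_le_iff_of_nonneg zero_le_one).2 fun i => ?_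
  rw [Real.norm_eq_abs, ← hx]
  exact Finset.single_le_sum (f := fun i => |x i|) (fun _ _ => abs_nonneg _) (Finset.mem_univ i)

lemma isCompact_sum_abs_eq_one (ι : Type*) [Fintype ι] :
    IsCompact {x : ι → ℝ | ∑ i, |x i| = 1} := by
  refine Metric.isCompact_of_isClosed_isBounded (isClosed_eq (by fun_prop) continuous_const) ?_
  refine (Metric.isBounded_closedBall (x := (0 : ι → ℝ)) (r := 1)).subset fun x hx => ?_
  simpa using norm_le_one_of_sum_abs_eq_one hx

lemma smul_single_mem_crossPolytopeFace {ι : Type*} [Fintype ι] [DecidableEq ι] (s : ι → ℤˣ)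
    (i : ι) : s i • (Pi.single i 1 : ι → ℝ) ∈ crossPolytopeFace s := by
  have key : ∀ j, ((s j : ℤ) : ℝ) * (s i • (Pi.single i 1 : ι → ℝ)) j =
      if j = i then 1 else 0 := by
    intro j
    rw [Pi.smul_apply, Units.smul_def]
    split_ifs with h
    · subst h
      rcases Int.units_eq_one_or (s j) with h | h <;> simp [h]
    · simp [Pi.single_eq_of_ne h]
  refine ⟨fun j => ?_, ?_⟩
  · rw [key]
    split_ifs <;> norm_num
  · simp only [key]
    simp

open ListChain in
/-- For odd functions there are arbitrarily small simplices, with vertices on the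
cross-polytope, along whose successive edges the functions successively change sign. -/
lemma exists_small_sign_changing_simplex (n : ℕ) (f : ℕ → (Fin (n + 1) → ℝ) → ℝ)
    (hodd : ∀ i x, f i (-x) = -f i x) {ε : ℝ} (hε : 0 < ε) :
    ∃ v : ℕ → Fin (n + 1) → ℝ, (∀ i ≤ n, ∑ j, |v i j| = 1) ∧
      (∀ i ≤ n, dist (v i) (v 0) ≤ ε) ∧ ∀ i < n, f i (v i) * f i (v (i + 1)) ≤ 0 := by
  set e : ℕ → Fin (n + 1) → ℝ := fun i => if h : i < n + 1 then Pi.single ⟨i, h⟩ 1 else 0 with he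
  obtain ⟨N, hN⟩ : ∃ N : ℕ, ((n : ℝ) / (n + 1)) ^ N * 2 < ε := by
    have hlt : (n : ℝ) / (n + 1) < 1 := by
      rw [div_lt_one (by positivity)]
      linarith
    obtain ⟨N, hN⟩ := exists_pow_lt_of_lt_one (half_pos hε) hlt
    exact ⟨N, by linarith⟩
  set c : ℕ → ListChain (Fin (n + 1) → ℝ) := fun k =>
    (subdivision (k + 1))^[N] (hemisphere e k) with hc
  have hface : ∀ k ≤ n, c k ∈ Finsupp.supported (ZMod 2) (ZMod 2)
      (⋃ s, smallSimplices (crossPolytopeFace s) ((n / (n + 1)) ^ N * 2) (k + 1)) := by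
    intro k hk
    refine iterate_subdivision_mem_supported convex_crossPolytopeFace zero_le_two (by omega)
      (Finsupp.supported_mono ?_ (hemisphere_mem_supported e k)) N
    rintro l ⟨hlen, s, hs⟩
    have hmem : ∀ v ∈ l, v ∈ crossPolytopeFace fun i : Fin (n + 1) => s i := by
      intro v hv
      obtain ⟨i, hi, rfl⟩ := hs v hv
      have hi' : i < n + 1 := by omega
      simp only [he, hi', dite_true]
      exact smul_single_mem_crossPolytopeFace (fun i : Fin (n + 1) => s i) ⟨i, hi'⟩
    refine Set.mem_iUnion.2 ⟨fun i => s i, hlen, hmem, fun v hv w hw => ?_⟩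
    have hv1 := norm_le_one_of_sum_abs_eq_one (sum_abs_eq_one_of_mem_crossPolytopeFace (hmem v hv))
    have hw1 := norm_le_one_of_sum_abs_eq_one (sum_abs_eq_one_of_mem_crossPolytopeFace (hmem w hw))
    linarith [dist_le_norm_add_norm v w]
  have hsupp : ∀ k ≤ n, c k ∈ Finsupp.supported (ZMod 2) (ZMod 2)
      {l | l.length = k + 1 ∧ ∀ v ∈ l, v ≠ 0} := by
    intro k hk
    refine Finsupp.supported_mono (fun l hl => ?_) (hface k hk)
    obtain ⟨s, hlen, hs, -⟩ := Set.mem_iUnion.1 hl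
    refine ⟨hlen, fun v hv hv0 => ?_⟩
    have := sum_abs_eq_one_of_mem_crossPolytopeFace (hs v hv)
    simp [hv0] at this
  have hbd : ∀ k < n, boundary (c (k + 1)) = c k + antipode (c k) := by
    intro k _
    have hlen : hemisphere e (k + 1) ∈ Finsupp.supported (ZMod 2) (ZMod 2)
        {l | l.length = k + 1 + 1} :=
      Finsupp.supported_mono (fun l hl => hl.1) (hemisphere_mem_supported e (k + 1))
    simp only [hc]
    rw [boundary_iterate_subdivision _ hlen, (boundary_add_antipode_hemisphere e k).2,
      iterate_map_add, antipode_iterate_subdivision]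
  choose p hp hpf using fun i => exists_antipodal_colouring (f i) (hodd i)
  have hone := eval_cupCoboundaries_tower n c (e 0)
    (Function.iterate_fixed (subdivision_one_single _) N) hsupp hbd n le_rfl p hp
  obtain ⟨l, hl, hcup⟩ : ∃ l ∈ (c n).support, cupCoboundaries p l ≠ 0 := by
    by_contra! h
    have h0 : eval (cupCoboundaries p) (c n) = 0 := by
      rw [eval, Finsupp.linearCombination_apply]
      exact Finset.sum_eq_zero fun l hl => by simp [h l hl]
    rw [h0] at hone
    exact zero_ne_one hone
  obtain ⟨s, hlen, hs, hdist⟩ := Set.mem_iUnion.1 ((Finsupp.mem_supported _ _).1 (hface n le_rfl) hl)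
  have hget : ∀ i (hi : i ≤ n), l.getD i 0 = l[i] := fun i hi =>
    List.getD_eq_getElem l 0 (by omega)
  refine ⟨fun i => l.getD i 0, fun i hi => ?_, fun i hi => ?_, fun i hi => ?_⟩
  · simp only [hget i hi]
    exact sum_abs_eq_one_of_mem_crossPolytopeFace (hs _ (List.getElem_mem _))
  · simp only [hget i hi, hget 0 (Nat.zero_le n)]
    exact (hdist _ (List.getElem_mem _) _ (List.getElem_mem _)).trans hN.le
  · simp only [hget i hi.le, hget (i + 1) hi]
    exact hpf i _ _ (ne_of_cupCoboundaries_ne_zero l p hcup i (by omega))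

/-- **Borsuk-Ulam**, for maps defined away from the origin. -/
theorem borsuk_ulam_pi (n : ℕ) (f : ℕ → (Fin (n + 1) → ℝ) → ℝ)
    (hodd : ∀ i x, f i (-x) = -f i x) (hf : ∀ i, ContinuousOn (f i) {0}ᶜ) :
    ∃ x ≠ 0, ∀ i < n, f i x = 0 := by
  have hex := fun N : ℕ => exists_small_sign_changing_simplex n f hodd
    (Nat.one_div_pos_of_nat (α := ℝ) (n := N))
  choose v hvK hvdist hvf using hex
  obtain ⟨x, hxK, φ, hφ, hlim⟩ := (isCompact_sum_abs_eq_one (Fin (n + 1))).tendsto_subseq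
    (x := fun N => v N 0) (fun N => hvK N 0 (Nat.zero_le n))
  have hx0 : x ≠ 0 := by
    rintro rfl
    simp at hxK
  have hlim' : ∀ i ≤ n, Tendsto (fun N => v (φ N) i) atTop (𝓝 x) := by
    intro i hi
    refine (tendsto_iff_of_dist ?_).2 hlim
    refine squeeze_zero (fun _ => dist_nonneg) (fun N => hvdist (φ N) i hi) ?_
    exact tendsto_one_div_add_atTop_nhds_zero_nat.comp hφ.tendsto_atTop
  refine ⟨x, hx0, fun i hi => ?_⟩
  have hcont : ContinuousAt (f i) x := (hf i).continuousAt (isOpen_compl_singleton.mem_nhds hx0)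
  have h := le_of_tendsto ((hcont.tendsto.comp (hlim' i hi.le)).mul
    (hcont.tendsto.comp (hlim' (i + 1) hi))) (Eventually.of_forall fun N => hvf (φ N) i hi)
  nlinarith

/-- **Borsuk-Ulam** as a linking property: an odd map from a sphere of dimension `n` meets every
closed subspace of codimension at most `n`. -/
theorem exists_mem_of_odd_of_finrank_quotient_le {X Y : Type*} [NormedAddCommGroup X]
    [NormedSpace ℝ X] [NormedAddCommGroup Y] [NormedSpace ℝ Y] [FiniteDimensional ℝ Y]
    (W : Submodule ℝ X) (hW : IsClosed (W : Set X)) [FiniteDimensional ℝ (X ⧸ W)] {n : ℕ}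
    (hY : Module.finrank ℝ Y = n + 1) (hWn : Module.finrank ℝ (X ⧸ W) ≤ n) {r : ℝ} (hr : 0 < r)
    (h : C(Metric.sphere (0 : Y) r, X)) (hodd : ∀ s, h (-s) = -h s) : ∃ s, h s ∈ W := by
  have : IsClosed (W : Set X) := hW
  let B : (Fin (n + 1) → ℝ) ≃L[ℝ] Y :=
    ((Module.finBasisOfFinrankEq ℝ Y hY).equivFun.toContinuousLinearEquiv).symm
  let Q := (Module.finBasis ℝ (X ⧸ W)).equivFun
  have hB : ∀ x : ({0}ᶜ : Set (Fin (n + 1) → ℝ)), B x ≠ 0 := fun x hx =>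
    x.2 (by simpa using hx)
  let g : ({0}ᶜ : Set (Fin (n + 1) → ℝ)) → X := fun x => h ⟨(r * ‖B x‖⁻¹) • B x, by
    rw [mem_sphere_zero_iff_norm, norm_smul, norm_mul, norm_inv, norm_norm,
      Real.norm_of_nonneg hr.le, inv_mul_cancel_right₀ (norm_ne_zero_iff.2 (hB x))]⟩
  have hg : Continuous g := by
    refine h.continuous.comp (Continuous.subtype_mk ?_ _)
    have hBc : Continuous fun x : ({0}ᶜ : Set (Fin (n + 1) → ℝ)) => B x :=
      B.continuous.comp continuous_subtype_val
    exact (continuous_const.mul (hBc.norm.inv₀ fun x => norm_ne_zero_iff.2 (hB x))).smul hBc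
  classical
  let G : (Fin (n + 1) → ℝ) → X := fun x => if hx : x ∈ ({0}ᶜ : Set _) then g ⟨x, hx⟩ else 0
  have hGodd : ∀ x, G (-x) = -G x := by
    intro x
    by_cases hx : x = 0
    · simp [G, hx]
    · have hx' : -x ≠ 0 := neg_ne_zero.2 hx
      simp only [G, Set.mem_compl_iff, Set.mem_singleton_iff, hx, hx', not_false_eq_true,
        dite_true, g]
      rw [← hodd]
      congr 1
      ext1
      simp
  have hGcont : ContinuousOn G {0}ᶜ := by
    rw [continuousOn_iff_continuous_domRestrict]
    convert hg using 1
    ext x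
    simp only [Set.domRestrict_apply, G, x.2, dite_true]
  let f : ℕ → (Fin (n + 1) → ℝ) → ℝ := fun i x =>
    if hi : i < Module.finrank ℝ (X ⧸ W) then Q (W.mkQ (G x)) ⟨i, hi⟩ else 0
  obtain ⟨x, hx0, hx⟩ := borsuk_ulam_pi n f (fun i x => by
    by_cases hi : i < Module.finrank ℝ (X ⧸ W)
    · simp only [f, hi, dite_true, hGodd, map_neg, Pi.neg_apply]
    · simp [f, hi]) (fun i => by
    by_cases hi : i < Module.finrank ℝ (X ⧸ W)
    · simp only [f, hi, dite_true]
      have hQ : Continuous Q := Q.toLinearMap.continuous_of_finiteDimensional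
      exact ((continuous_apply _).comp (hQ.comp W.mkQL.continuous)).comp_continuousOn hGcont
    · simp only [f, hi, dite_false]
      exact continuousOn_const)
  have hmk : W.mkQ (G x) = 0 := by
    apply Q.injective
    ext i
    have := hx i (i.2.trans_le hWn)
    simp only [f, i.2, dite_true] at this
    rw [map_zero]
    exact this
  have hxc : x ∈ ({0}ᶜ : Set (Fin (n + 1) → ℝ)) := hx0
  refine ⟨_, (Submodule.Quotient.mk_eq_zero W (x := g ⟨x, hxc⟩)).1 ?_⟩
  have : G x = g ⟨x, hxc⟩ := dif_pos hxc
  rwa [← this]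

/-- A form of **Ekeland's variational principle**. -/
theorem LowerSemicontinuous.exists_strict_minimum_of_dist {α : Type*} [MetricSpace α]
    [CompleteSpace α] {Φ : α → ℝ} (hΦ : LowerSemicontinuous Φ) {b : ℝ} (hb : ∀ x, b ≤ Φ x)
    (x₀ : α) {δ : ℝ} (hδ : 0 < δ) :
    ∃ x, Φ x ≤ Φ x₀ ∧ ∀ y, Φ y + δ * dist x y ≤ Φ x → y = x := by
  let T : α → Set α := fun x => {y | Φ y + δ * dist x y ≤ Φ x}
  have hself : ∀ x, x ∈ T x := fun x => by simp [T]
  have htrans : ∀ {x y z}, y ∈ T x → z ∈ T y → z ∈ T x := fun {x y z} hy hz => by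
    simp only [T, Set.mem_ofPred_eq] at *
    nlinarith [dist_triangle x y z]
  have hclosed : ∀ x, IsClosed (T x) := fun x => by
    have : LowerSemicontinuous fun y => Φ y + δ * dist x y :=
      hΦ.add (Continuous.lowerSemicontinuous (by fun_prop))
    exact this.isClosed_preimage (Φ x)
  have hstep : ∀ (n : ℕ) (x : α), ∃ y ∈ T x, ∀ z ∈ T x, Φ y ≤ Φ z + 1 / (n + 1) := by
    intro n x
    have hbdd : BddBelow (Φ '' T x) := ⟨b, by rintro _ ⟨y, -, rfl⟩; exact hb y⟩
    obtain ⟨_, ⟨y, hy, rfl⟩, hlt⟩ := exists_lt_of_csInf_lt (Set.Nonempty.image Φ ⟨x, hself x⟩)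
      (lt_add_of_pos_right (sInf (Φ '' T x)) (Nat.one_div_pos_of_nat (α := ℝ) (n := n)))
    refine ⟨y, hy, fun z hz => ?_⟩
    linarith [csInf_le hbdd (Set.mem_image_of_mem Φ hz)]
  choose next hnext hmin using hstep
  let x : ℕ → α := fun n => Nat.rec x₀ next n
  have hx : ∀ n, x (n + 1) = next n (x n) := fun n => rfl
  have hmem : ∀ n m, n ≤ m → x m ∈ T (x n) := by
    intro n m hnm
    induction m, hnm using Nat.le_induction with
    | base => exact hself _
    | succ m _ ih => exact htrans ih (by rw [hx]; exact hnext m _)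
  have hsmall : ∀ n, ∀ z ∈ T (x (n + 1)), dist (x (n + 1)) z ≤ 1 / (n + 1) / δ := by
    intro n z hz
    have h1 := hmin n (x n) z (htrans (hmem n (n + 1) n.le_succ) hz)
    rw [← hx] at h1
    rw [le_div_iff₀ hδ]
    simp only [T, Set.mem_ofPred_eq] at hz
    linarith
  have hlim0 : Tendsto (fun n : ℕ => (1 : ℝ) / (n + 1) / δ) atTop (𝓝 0) := by
    simpa using (tendsto_one_div_add_atTop_nhds_zero_nat (𝕜 := ℝ)).div_const δ
  have hcauchy : CauchySeq fun n => x (n + 1) :=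
    cauchySeq_of_le_tendsto_0' _ (fun n m hnm => hsmall n _ (hmem (n + 1) (m + 1) (by omega))) hlim0
  obtain ⟨y, hy⟩ := cauchySeq_tendsto_of_complete hcauchy
  have hyT : ∀ n, y ∈ T (x n) := fun n => (hclosed _).mem_of_tendsto hy
    ((eventually_ge_atTop n).mono fun m hm => hmem n (m + 1) (by omega))
  refine ⟨y, ?_, fun z hz => ?_⟩
  · have h0 : Φ y + δ * dist x₀ y ≤ Φ x₀ := hyT 0
    nlinarith [dist_nonneg (x := x₀) (y := y)]
  · have hz' : Tendsto (fun n => x (n + 1)) atTop (𝓝 z) := by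
      rw [tendsto_iff_dist_tendsto_zero]
      exact squeeze_zero (fun _ => dist_nonneg)
        (fun n => hsmall n z (htrans (hyT (n + 1)) hz)) hlim0
    exact tendsto_nhds_unique hz' hy

section Minimax

variable {X : Type*} [NormedAddCommGroup X] [NormedSpace ℝ X]

/-- An odd continuous pseudo-gradient field on a closed symmetric set on which the norm of the
derivative is bounded below. -/
lemma exists_odd_pseudogradient {dL : X → X →L[ℝ] ℝ} (hcont : Continuous dL)
    (hodd : ∀ x, dL (-x) = -dL x) {M : Set X} (hM : IsClosed M) (hsymm : ∀ x ∈ M, -x ∈ M)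
    {η : ℝ} (hη : ∀ x ∈ M, η < ‖dL x‖) :
    ∃ V : C(X, X), (∀ x, V (-x) = -V x) ∧ (∀ x, ‖V x‖ ≤ 1) ∧ ∀ x ∈ M, dL x (V x) < -η := by
  obtain ⟨V, hV⟩ := exists_continuous_forall_mem_convex_of_local_const
    (t := fun x => {v : X | ‖v‖ ≤ 1 ∧ (x ∈ M → dL x v < -η)}) (fun x v hv w hw c d hc hd hcd => by
      refine ⟨?_, fun hx => ?_⟩
      · have := convex_closedBall (0 : X) 1 (by simpa using hv.1) (by simpa using hw.1) hc hd hcd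
        simpa using this
      · have := convex_Iio (𝕜 := ℝ) (-η) (hv.2 hx) (hw.2 hx) hc hd hcd
        simpa using this) (fun x => by
      by_cases hx : x ∈ M
      · obtain ⟨v, hv1, hv⟩ := (dL x).exists_lt_apply_of_lt_opNorm (hη x hx)
        obtain ⟨w, hw1, hw⟩ : ∃ w : X, ‖w‖ ≤ 1 ∧ dL x w < -η := by
          rcases le_total 0 (dL x v) with h | h
          · rw [Real.norm_of_nonneg h] at hv
            exact ⟨-v, by simpa using hv1.le, by simpa using hv⟩
          · rw [Real.norm_of_nonpos h] at hv
            exact ⟨v, hv1.le, by linarith⟩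
        refine ⟨w, ?_⟩
        have hc : ContinuousAt (fun y => dL y w) x := by fun_prop
        filter_upwards [hc.eventually_lt_const hw] with y hy using ⟨hw1, fun _ => hy⟩
      · refine ⟨0, ?_⟩
        filter_upwards [hM.isOpen_compl.mem_nhds hx] with y hy
        exact ⟨by simp, fun h => absurd h hy⟩)
  refine ⟨⟨fun x => (2⁻¹ : ℝ) • (V x - V (-x)), by fun_prop⟩, fun x => ?_, fun x => ?_,
    fun x hx => ?_⟩
  · simp only [ContinuousMap.coe_mk, neg_neg, ← smul_neg, neg_sub]
  · simp only [ContinuousMap.coe_mk]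
    rw [norm_smul, Real.norm_of_nonneg (by norm_num)]
    have := norm_sub_le (V x) (V (-x))
    have h1 := (hV x).1
    have h2 := (hV (-x)).1
    linarith
  · have h1 := (hV x).2 hx
    have h2 := (hV (-x)).2 (hsymm x hx)
    rw [hodd, neg_apply] at h2
    simp only [ContinuousMap.coe_mk, map_smul, map_sub, smul_eq_mul]
    linarith

/-- Moving a compact set a short time along a pseudo-gradient field lowers the supremum of the
functional at a definite rate. -/
lemma exists_pos_forall_le_sub_mul {S : Type*} [TopologicalSpace S] [CompactSpace S]
    {L : X → ℝ} {dL : X → X →L[ℝ] ℝ} (hderiv : ∀ x, HasFDerivAt L (dL x) x)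
    (hcont : Continuous dL) (h V : C(S, X)) {b m ε η : ℝ} (hε : 0 < ε) (hη : 0 < η) (hbm : b ≤ m)
    (hm : ∀ s, L (h s) ≤ m) (hV : ∀ s, b - ε ≤ L (h s) → dL (h s) (V s) < -η) :
    ∃ t > 0, ∀ s, L (h s + t • V s) ≤ m - η * t := by
  have hLc : Continuous L := continuous_iff_continuousAt.2 fun x => (hderiv x).continuousAt
  have hK : IsCompact {s | b - ε ≤ L (h s)} :=
    (isClosed_le continuous_const (by fun_prop)).isCompact
  have h1 : ∀ᶠ t in 𝓝 (0 : ℝ), ∀ s ∈ {s | b - ε ≤ L (h s)}, dL (h s + t • V s) (V s) < -η := by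
    refine hK.eventually_forall_of_forall_eventually fun s hs => ?_
    have hc : Continuous fun z : ℝ × S => dL (h z.2 + z.1 • V z.2) (V z.2) := by fun_prop
    exact hc.continuousAt.eventually_lt_const (by simpa using hV s hs)
  have h2 : ∀ᶠ t in 𝓝 (0 : ℝ), ∀ s ∈ (Set.univ : Set S),
      L (h s + t • V s) - L (h s) < ε / 2 := by
    refine isCompact_univ.eventually_forall_of_forall_eventually fun s _ => ?_
    have hc : Continuous fun z : ℝ × S => L (h z.2 + z.1 • V z.2) - L (h z.2) := by fun_prop
    exact hc.continuousAt.eventually_lt_const (by simpa using half_pos hε)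
  obtain ⟨ρ, hρ, hball⟩ := Metric.eventually_nhds_iff.1 (h1.and h2)
  set t := min (ρ / 2) (ε / (2 * η)) with ht
  have htpos : 0 < t := by positivity
  have htρ : t < ρ := (min_le_left _ _).trans_lt (by linarith)
  have htη : η * t ≤ ε / 2 := by
    calc η * t ≤ η * (ε / (2 * η)) := by gcongr; exact min_le_right _ _
      _ = ε / 2 := by field_simp
  refine ⟨t, htpos, fun s => ?_⟩
  by_cases hs : b - ε ≤ L (h s)
  · have hd : ∀ τ : ℝ, HasDerivAt (fun τ : ℝ => L (h s + τ • V s))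
        (dL (h s + τ • V s) (V s)) τ := by
      intro τ
      have hline : HasDerivAt (fun τ : ℝ => h s + τ • V s) (V s) τ := by
        simpa using ((hasDerivAt_id τ).smul_const (V s)).const_add (h s)
      exact (hderiv _).comp_hasDerivAt τ hline
    have hmv := (convex_Icc (0 : ℝ) t).image_sub_le_mul_sub_of_deriv_le
      (f := fun τ : ℝ => L (h s + τ • V s)) (C := -η)
      (fun τ _ => (hd τ).continuousAt.continuousWithinAt)
      (fun τ _ => (hd τ).differentiableAt.differentiableWithinAt)
      (fun τ hτ => by
        rw [interior_Icc] at hτ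
        rw [(hd τ).deriv]
        refine ((hball ?_).1 s hs).le
        rw [Real.dist_0_eq_abs, abs_of_pos hτ.1]
        exact hτ.2.trans htρ)
      0 ⟨le_rfl, htpos.le⟩ t ⟨htpos.le, le_rfl⟩ htpos.le
    simp only [zero_smul, add_zero, sub_zero] at hmv
    linarith [hm s]
  · have := (hball (y := t) (by rwa [Real.dist_0_eq_abs, abs_of_pos htpos])).2 s trivial
    push Not at hs
    linarith

/-- Minimax over odd maps: if every odd map from `S` reaches the level `b`, and one of them stays
below `a`, then there are almost critical points with values almost in `[b, a]`. -/
theorem exists_almost_critical_of_odd_linking [CompleteSpace X] {S : Type*} [TopologicalSpace S]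
    [CompactSpace S] [Nonempty S] [Neg S] {L : X → ℝ} {dL : X → X →L[ℝ] ℝ}
    (hderiv : ∀ x, HasFDerivAt L (dL x) x) (hcont : Continuous dL)
    (heven : ∀ x, L (-x) = L x) {a b : ℝ} (h₀ : C(S, X)) (h₀odd : ∀ s, h₀ (-s) = -h₀ s)
    (h₀a : ∀ s, L (h₀ s) ≤ a)
    (hlink : ∀ h : C(S, X), (∀ s, h (-s) = -h s) → ∃ s, b ≤ L (h s))
    {ε : ℝ} (hε : 0 < ε) : ∃ x, L x ∈ Set.Icc (b - ε) a ∧ ‖dL x‖ ≤ ε := by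
  by_contra! hno
  have hLc : Continuous L := continuous_iff_continuousAt.2 fun x => (hderiv x).continuousAt
  have hdodd : ∀ x, dL (-x) = -dL x := by
    intro x
    have h1 : HasFDerivAt (fun y => L (-y)) ((dL (-x)).comp (-ContinuousLinearMap.id ℝ X)) x :=
      (hderiv (-x)).comp x (hasFDerivAt_id x).neg
    simp only [heven] at h1
    have h2 := h1.unique (hderiv x)
    rw [← h2]
    ext v
    simp
  obtain ⟨V, hVodd, hV1, hV⟩ := exists_odd_pseudogradient hcont hdodd
    (M := {x | L x ∈ Set.Icc (b - ε) a}) (isClosed_Icc.preimage hLc)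
    (fun x hx => by simpa only [Set.mem_ofPred_eq, heven] using hx) hno
  let Γ := {h : C(S, X) | ∀ s, h (-s) = -h s}
  have hΓ : IsClosed Γ := by
    simp only [Γ, Set.ofPred_forall]
    exact isClosed_iInter fun s => isClosed_eq (by fun_prop) (by fun_prop)
  have : CompleteSpace Γ := hΓ.completeSpace_coe
  have hbdd : ∀ h : C(S, X), BddAbove (Set.range fun s => L (h s)) := fun h =>
    (isCompact_range (by fun_prop)).bddAbove
  let Φ : Γ → ℝ := fun h => ⨆ s, L (h.1 s)
  have hle : ∀ (h : Γ) s, L (h.1 s) ≤ Φ h := fun h s => le_ciSup (hbdd h.1) s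
  have hΦ : LowerSemicontinuous Φ := lowerSemicontinuous_ciSup (fun h => hbdd h.1)
    fun s => Continuous.lowerSemicontinuous (by fun_prop)
  have hΦb : ∀ h, b ≤ Φ h := fun h => by
    obtain ⟨s, hs⟩ := hlink h.1 h.2
    exact hs.trans (hle h s)
  obtain ⟨h, hh₀, hmin⟩ := hΦ.exists_strict_minimum_of_dist hΦb ⟨h₀, h₀odd⟩ hε
  have hha : Φ h ≤ a := hh₀.trans (ciSup_le h₀a)
  obtain ⟨t, ht, hdec⟩ := exists_pos_forall_le_sub_mul hderiv hcont h.1 (V.comp h.1) hε hε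
    (hΦb h) (hle h) (fun s hs => hV _ ⟨hs, (hle h s).trans hha⟩)
  let g : Γ := ⟨h.1 + t • V.comp h.1, fun s => by
    have := h.2 s
    simp only [ContinuousMap.add_apply, ContinuousMap.smul_apply, ContinuousMap.comp_apply, this,
      hVodd, smul_neg, neg_add]⟩
  have hgΦ : Φ g ≤ Φ h - ε * t := ciSup_le hdec
  have hdist : dist h g ≤ t := by
    rw [Subtype.dist_eq, ContinuousMap.dist_le ht.le]
    intro s
    simp only [g, ContinuousMap.add_apply, ContinuousMap.smul_apply, ContinuousMap.comp_apply,
      dist_self_add_right, norm_smul, Real.norm_of_nonneg ht.le]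
    nlinarith [hV1 (h.1 s)]
  have hgh : g = h := hmin g (by nlinarith)
  rw [hgh] at hgΦ
  nlinarith

end Minimax

/-- Almost critical points with values almost in `[b, a]` produce a critical point under the
Palais-Smale condition. -/
lemma exists_critical_of_palaisSmaleC {X : Type*} [NormedAddCommGroup X] [NormedSpace ℝ X]
    {L : X → ℝ} {dL : X → X →L[ℝ] ℝ} (hL : Continuous L) (hcont : Continuous dL) {a b : ℝ}
    (hPS : ∀ c ∈ Set.Icc b a, PalaisSmaleC L dL c)
    (h : ∀ ε > 0, ∃ x, L x ∈ Set.Icc (b - ε) a ∧ ‖dL x‖ ≤ ε) :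
    ∃ u, dL u = 0 ∧ L u ∈ Set.Icc b a := by
  choose x hxL hxd using fun n : ℕ => h (1 / (n + 1)) Nat.one_div_pos_of_nat
  have hzero := tendsto_one_div_add_atTop_nhds_zero_nat (𝕜 := ℝ)
  obtain ⟨c, -, φ, hφ, hc⟩ := (isCompact_Icc (a := b - 1) (b := a)).tendsto_subseq
    (x := fun n => L (x n)) (fun n => ⟨le_trans (by
      have : (1 : ℝ) / (n + 1) ≤ 1 := by
        rw [div_le_one (by positivity)]
        linarith [n.cast_nonneg (α := ℝ)]
      linarith) (hxL n).1, (hxL n).2⟩)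
  have hcab : c ∈ Set.Icc b a := by
    refine ⟨?_, le_of_tendsto hc (Eventually.of_forall fun n => (hxL (φ n)).2)⟩
    have hb : Tendsto (fun n => b - 1 / ((φ n : ℝ) + 1)) atTop (𝓝 (b - 0)) :=
      tendsto_const_nhds.sub (hzero.comp hφ.tendsto_atTop)
    rw [sub_zero] at hb
    exact le_of_tendsto_of_tendsto' hb hc fun n => (hxL (φ n)).1
  have hd : Tendsto (fun n => ‖dL (x (φ n))‖) atTop (𝓝 0) :=
    squeeze_zero (fun _ => norm_nonneg _) (fun n => hxd (φ n)) (hzero.comp hφ.tendsto_atTop)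
  obtain ⟨y, ψ, hψ, hy⟩ := hPS c hcab (fun n => x (φ n)) hc hd
  have h1 := tendsto_nhds_unique ((hcont.norm.tendsto y).comp hy) (hd.comp hψ.tendsto_atTop)
  have h2 := tendsto_nhds_unique ((hL.tendsto y).comp hy) (hc.comp hψ.tendsto_atTop)
  exact ⟨y, norm_eq_zero.1 h1, h2 ▸ hcab⟩

/-- The vectors of a Schauder basis are linearly independent. -/
lemma linearIndependent_of_unique_expansion {X : Type*} [NormedAddCommGroup X] [NormedSpace ℝ X]
    {e : ℕ → X} (hbasis : ∀ x : X, ∃! a : ℕ → ℝ,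
      Tendsto (fun n => ∑ j ∈ Finset.range n, a j • e j) atTop (𝓝 x)) :
    LinearIndependent ℝ e := by
  rw [linearIndependent_iff]
  intro l hl
  have h0 : Tendsto (fun n => ∑ j ∈ Finset.range n, (0 : ℕ → ℝ) j • e j) atTop (𝓝 0) := by simp
  obtain ⟨N, hN⟩ := l.support.exists_nat_subset_range
  have h1 : Tendsto (fun n => ∑ j ∈ Finset.range n, l j • e j) atTop (𝓝 0) := by
    refine tendsto_const_nhds.congr' ((eventually_ge_atTop N).mono fun n hn => ?_)
    rw [← hl, Finsupp.linearCombination_apply]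
    refine Finset.sum_subset (hN.trans (Finset.range_mono hn)) fun i _ hi => ?_
    simp [Finsupp.notMem_support_iff.1 hi]
  exact DFunLike.coe_injective ((hbasis 0).unique h1 h0)

/-- Every vector is, modulo a closed subspace containing the tail of the basis, a combination of
the first `k` basis vectors. -/
lemma span_range_mkQ_eq_top {X : Type*} [NormedAddCommGroup X] [NormedSpace ℝ X] {e : ℕ → X}
    (hbasis : ∀ x : X, ∃ a : ℕ → ℝ,
      Tendsto (fun n => ∑ j ∈ Finset.range n, a j • e j) atTop (𝓝 x)) {W : Submodule ℝ X}
    (hW : IsClosed (W : Set X)) {k : ℕ} (htail : ∀ j ≥ k, e j ∈ W) :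
    Submodule.span ℝ (Set.range fun j : Fin k => W.mkQ (e j)) = ⊤ := by
  rw [eq_top_iff]
  rintro q -
  obtain ⟨x, rfl⟩ := W.mkQ_surjective q
  obtain ⟨c, hc⟩ := hbasis x
  have hmem : x - ∑ j ∈ Finset.range k, c j • e j ∈ W := by
    refine hW.mem_of_tendsto (hc.sub_const _) ((eventually_ge_atTop k).mono fun n hn => ?_)
    rw [← Finset.sum_range_add_sum_Ico _ hn, add_sub_cancel_left]
    exact W.sum_mem fun j hj => W.smul_mem _ (htail j (Finset.mem_Ico.1 hj).1)
  have hx : W.mkQ x = ∑ j : Fin k, c j • W.mkQ (e j) := by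
    rw [← sub_eq_zero, Fin.sum_univ_eq_sum_range (fun j => c j • W.mkQ (e j))]
    have h0 : W.mkQ (x - ∑ j ∈ Finset.range k, c j • e j) = 0 :=
      (Submodule.Quotient.mk_eq_zero W).2 hmem
    simpa only [map_sub, map_sum, map_smul] using h0
  rw [hx]
  exact Submodule.sum_mem _ fun j _ => Submodule.smul_mem _ _ (Submodule.subset_span ⟨j, rfl⟩)

/-- Theorem 4.3 of the paper.  The Schauder basis `(e_j)_{j≥1}` of the paper is
encoded as `e : ℕ → X` (Lean index `j` is the paper index `j+1`); the Lean index
`k` corresponds to the paper index `k+1`, so the paper's `Y_k = span{e_1,…,e_k}`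
is `span (e '' Set.Iio (k+1))`, the paper's `e_k` is `e k`, and the paper's
`Z_{k+1} = cl span{e_j : j ≥ k+1}` is the closure of `span (e '' Set.Ici (k+1))`.
Under `(L₃)` and `(L₄)` one has `b ≤ a`, and if `L` satisfies `(PS)_c` for all
`c ∈ [b, a]`, then `L` has a critical point with critical value in `[b, a]`. -/
theorem stmt11 {X : Type*} [NormedAddCommGroup X] [NormedSpace ℝ X] [CompleteSpace X]
    (e : ℕ → X)
    (hbasis : ∀ x : X, ∃! a : ℕ → ℝ,
      Tendsto (fun n => ∑ j ∈ Finset.range n, a j • e j) atTop (𝓝 x))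
    (L : X → ℝ) (dL : X → X →L[ℝ] ℝ)
    (hderiv : ∀ x, HasFDerivAt L (dL x) x) (hcont : Continuous dL)
    (heven : ∀ x : X, L (-x) = L x)
    (k : ℕ) (r : ℝ) (hr : 0 < r) (a b : ℝ)
    (hL3 : ∀ u ∈ Submodule.span ℝ (e '' Set.Iio (k + 1)), ‖u‖ = r → L u ≤ a)
    (hL4 : ∀ t : ℝ, ∀ z ∈ (Submodule.span ℝ (e '' Set.Ici (k + 1))).topologicalClosure,
      b ≤ L (t • e k + z)) :
    b ≤ a ∧ ((∀ c ∈ Set.Icc b a, PalaisSmaleC L dL c) →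
      ∃ u : X, dL u = 0 ∧ L u ∈ Set.Icc b a) := by
  set Z := (Submodule.span ℝ (e '' Set.Ici (k + 1))).topologicalClosure with hZ
  set Y := Submodule.span ℝ (e '' Set.Iio (k + 1)) with hYdef
  have hli := linearIndependent_of_unique_expansion hbasis
  have hLc : Continuous L := continuous_iff_continuousAt.2 fun x => (hderiv x).continuousAt
  have hYimage : Y = Submodule.span ℝ (Set.range fun j : Fin (k + 1) => e j) := by
    rw [hYdef]
    congr 1
    ext x
    constructor
    · rintro ⟨j, hj, rfl⟩
      exact ⟨⟨j, hj⟩, rfl⟩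
    · rintro ⟨j, rfl⟩
      exact ⟨j, j.2, rfl⟩
  have hYrank : Module.finrank ℝ Y = k + 1 := by
    rw [hYimage]
    exact (finrank_span_eq_card (hli.comp _ (Fin.val_injective (n := k + 1)))).trans (by simp)
  have : FiniteDimensional ℝ Y := Module.finite_of_finrank_pos (by omega)
  have : Nontrivial Y := Module.nontrivial_of_finrank_pos (R := ℝ) (by omega)
  have hab : b ≤ a := by
    have hek : ‖e k‖ ≠ 0 := norm_ne_zero_iff.2 (hli.ne_zero k)
    have hb := hL4 (r * ‖e k‖⁻¹) 0 (zero_mem _)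
    rw [add_zero] at hb
    refine hb.trans (hL3 _ (Submodule.smul_mem _ _ (Submodule.subset_span ⟨k, by simp, rfl⟩)) ?_)
    rw [norm_smul, norm_mul, norm_inv, norm_norm, Real.norm_of_nonneg hr.le,
      inv_mul_cancel_right₀ hek]
  refine ⟨hab, fun hPS => exists_critical_of_palaisSmaleC hLc hcont hPS fun ε hε => ?_⟩
  let W : Submodule ℝ X := Z ⊔ Submodule.span ℝ {e k}
  have hW : IsClosed (W : Set X) :=
    Submodule.isClosed_sup_finiteDimensional _ _ (Submodule.isClosed_topologicalClosure _)
  have htail : ∀ j ≥ k, e j ∈ W := by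
    intro j hj
    rcases hj.eq_or_lt with rfl | hj
    · exact Submodule.mem_sup_right (Submodule.mem_span_singleton_self _)
    · exact Submodule.mem_sup_left (Submodule.le_topologicalClosure _
        (Submodule.subset_span ⟨j, hj, rfl⟩))
  have hspan := span_range_mkQ_eq_top (fun x => (hbasis x).exists) hW htail
  have hquot : FiniteDimensional ℝ (X ⧸ W) :=
    Module.finite_def.2 (hspan ▸ Submodule.fg_span (Set.finite_range _))
  have hrank : Module.finrank ℝ (X ⧸ W) ≤ k := by
    simpa using finrank_le_of_span_eq_top hspan
  have : Nonempty (Metric.sphere (0 : Y) r) := (NormedSpace.sphere_nonempty.2 hr.le).to_subtype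
  refine exists_almost_critical_of_odd_linking hderiv hcont heven
    (⟨fun s : Metric.sphere (0 : Y) r => ((s : Y) : X), by fun_prop⟩ : C(_, X)) (fun s => by simp)
    (fun s => hL3 _ s.1.2 ?_) (fun h hodd => ?_) hε
  · exact mem_sphere_zero_iff_norm.1 s.2
  · obtain ⟨s, hs⟩ := exists_mem_of_odd_of_finrank_quotient_le W hW hYrank hrank hr h hodd
    obtain ⟨z, hz, w, hw, hzw⟩ := Submodule.mem_sup.1 hs
    obtain ⟨t, rfl⟩ := Submodule.mem_span_singleton.1 hw
    refine ⟨s, ?_⟩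
    rw [← hzw, add_comm]
    exact hL4 t z hz
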